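/- Let A and B be m×m positive definite complex matrices. The map α : [0,1] → 𝓟 defined by α(t) = A #_t B satisfies δ(α(s), α(t)) = |t − s| · δ(A,B) for all s, t ∈ [0,1]; i.e., after reparametrization by arc length it is an isometry onto the geodesic arc from A to B, with α(0) = A and α(1) = B. -/

import Mathlib

/-!
The number `δ(X, Y)` depends only on the spectrum of `X^{-1/2} Y X^{-1/2}`, which is that of
`Y X⁻¹`. A congruence `X ↦ P X Pᴴ` replaces `Y X⁻¹` by the similar matrix `P (Y X⁻¹) P⁻¹`, so `δ` is
invariant under congruence. With `C = A^{-1/2} B A^{-1/2}`, the curve `A #_t B` is the image of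
`t ↦ C ^ t` under the congruence by `A^{1/2}`, and
`δ(C ^ s, C ^ t) = ‖log (C ^ (t - s))‖₂ = |t - s| ‖log C‖₂ = |t - s| δ(A, B)`.
-/

open Matrix
open scoped ComplexOrder

noncomputable def matFun {m : ℕ} (f : ℝ → ℝ) (A : Matrix (Fin m) (Fin m) ℂ) :
    Matrix (Fin m) (Fin m) ℂ :=
  if hA : A.IsHermitian then
    (hA.eigenvectorUnitary : Matrix (Fin m) (Fin m) ℂ) *
      Matrix.diagonal (fun i => (f (hA.eigenvalues i) : ℂ)) *
      (star (hA.eigenvectorUnitary : Matrix (Fin m) (Fin m) ℂ))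
  else 0

/-- The unique positive definite square root of a positive definite matrix
(realized via the spectral decomposition). -/
noncomputable def msqrt {m : ℕ} (A : Matrix (Fin m) (Fin m) ℂ) : Matrix (Fin m) (Fin m) ℂ :=
  matFun Real.sqrt A

/-- The logarithm of a positive definite matrix: the unique Hermitian `L` with `exp L = A`. -/
noncomputable def mlog {m : ℕ} (A : Matrix (Fin m) (Fin m) ℂ) : Matrix (Fin m) (Fin m) ℂ :=
  matFun Real.log A

/-- The real power `A ^ t` of a positive definite matrix, via the spectral decomposition. -/
noncomputable def mpow {m : ℕ} (A : Matrix (Fin m) (Fin m) ℂ) (t : ℝ) : Matrix (Fin m) (Fin m) ℂ :=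
  matFun (fun x => x ^ t) A

/-- The matrix geometric mean `A # B`. -/
noncomputable def gmean {m : ℕ} (A B : Matrix (Fin m) (Fin m) ℂ) : Matrix (Fin m) (Fin m) ℂ :=
  msqrt A * msqrt ((msqrt A)⁻¹ * B * (msqrt A)⁻¹) * msqrt A

/-- The weighted geometric mean `A #_t B`. -/
noncomputable def wgmean {m : ℕ} (A B : Matrix (Fin m) (Fin m) ℂ) (t : ℝ) :
    Matrix (Fin m) (Fin m) ℂ :=
  msqrt A * mpow ((msqrt A)⁻¹ * B * (msqrt A)⁻¹) t * msqrt A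

/-- The Frobenius (Hilbert–Schmidt) norm `‖X‖₂ = (Tr(X*X))^{1/2}`. -/
noncomputable def fnorm {m : ℕ} (X : Matrix (Fin m) (Fin m) ℂ) : ℝ :=
  Real.sqrt ((Xᴴ * X).trace.re)

/-- The Riemannian metric `δ(A,B) = ‖log(A^{-1/2} B A^{-1/2})‖₂`. -/
noncomputable def rdist {m : ℕ} (A B : Matrix (Fin m) (Fin m) ℂ) : ℝ :=
  fnorm (mlog ((msqrt A)⁻¹ * B * (msqrt A)⁻¹))

/-- The Loewner order: `A ≤ B` iff `B - A` is positive semidefinite. -/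
def Loewner {m : ℕ} (A B : Matrix (Fin m) (Fin m) ℂ) : Prop :=
  (B - A).PosSemidef

lemma charpoly_mul_mul_inv {n R : Type*} [Fintype n] [DecidableEq n] [CommRing R]
    {P Q : Matrix n n R} (hP : IsUnit P) (hQ : IsUnit Q) (X Y : Matrix n n R) :
    (P * Y * Q * (P * X * Q)⁻¹).charpoly = (Y * X⁻¹).charpoly := by
  rw [isUnit_iff_isUnit_det] at hP hQ
  calc (P * Y * Q * (P * X * Q)⁻¹).charpoly
    _ = (P * (Y * X⁻¹ * P⁻¹)).charpoly := by
      simp only [Matrix.mul_inv_rev, mul_assoc, mul_nonsing_inv_cancel_left _ _ hQ]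
    _ = (Y * X⁻¹).charpoly := by
      rw [charpoly_mul_comm, mul_assoc, nonsing_inv_mul _ hP, mul_one]

section HermitianCalculus

variable {n 𝕜 : Type*} [Fintype n] [DecidableEq n] [RCLike 𝕜] {A B : Matrix n n 𝕜}

lemma trace_cfc_eq_sum_eigenvalues (hA : A.IsHermitian) (f : ℝ → ℝ) :
    (cfc f A).trace = ∑ i, (f (hA.eigenvalues i) : 𝕜) := by
  rw [hA.cfc_eq, IsHermitian.cfc, Unitary.conjStarAlgAut_apply, trace_mul_comm, ← mul_assoc]
  simp [trace_diagonal]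

lemma trace_cfc_eq_of_charpoly_eq (hA : A.IsHermitian) (hB : B.IsHermitian)
    (h : A.charpoly = B.charpoly) (f : ℝ → ℝ) : (cfc f A).trace = (cfc f B).trace := by
  rw [trace_cfc_eq_sum_eigenvalues hA, trace_cfc_eq_sum_eigenvalues hB,
    (hA.eigenvalues_eq_eigenvalues_iff hB).2 h]

end HermitianCalculus

section WeightedGeometricMean

open scoped MatrixOrder

variable {m : ℕ} {A B P X Y : Matrix (Fin m) (Fin m) ℂ}

lemma matFun_eq_cfc (f : ℝ → ℝ) (A : Matrix (Fin m) (Fin m) ℂ) : matFun f A = cfc f A := by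
  by_cases hA : A.IsHermitian
  · rw [matFun, dif_pos hA, hA.cfc_eq, IsHermitian.cfc, Unitary.conjStarAlgAut_apply]
    rfl
  · rw [matFun, dif_neg hA]
    exact (cfc_apply_of_not_predicate A hA).symm

lemma mpow_eq_rpow (hA : A.PosSemidef) (t : ℝ) : mpow A t = A ^ t := by
  rw [mpow, matFun_eq_cfc, CFC.rpow_eq_cfc_real hA.nonneg]

lemma mpow_zero (hA : A.IsHermitian) : mpow A 0 = 1 := by
  simp only [mpow, matFun_eq_cfc, Real.rpow_zero]
  exact cfc_const_one ℝ A hA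

lemma mpow_one (hA : A.IsHermitian) : mpow A 1 = A := by
  simp only [mpow, matFun_eq_cfc, Real.rpow_one]
  exact cfc_id' ℝ A hA

lemma posDef_mpow (hA : A.PosDef) (t : ℝ) : (mpow A t).PosDef := by
  rw [mpow_eq_rpow hA.posSemidef]
  exact (hA.isStrictlyPositive.rpow A t).posDef

lemma mpow_add (hA : A.PosDef) (s t : ℝ) : mpow A (s + t) = mpow A s * mpow A t := by
  simp only [mpow_eq_rpow hA.posSemidef, CFC.rpow_add hA.isUnit]

lemma inv_mpow (hA : A.PosDef) (t : ℝ) : (mpow A t)⁻¹ = mpow A (-t) :=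
  inv_eq_right_inv <| by rw [← mpow_add hA, add_neg_cancel, mpow_zero hA.isHermitian]

lemma mpow_mul_inv_mpow (hA : A.PosDef) (s t : ℝ) :
    mpow A t * (mpow A s)⁻¹ = mpow A (t - s) := by
  rw [inv_mpow hA, ← mpow_add hA, sub_eq_add_neg]

lemma mlog_mpow (hA : A.PosDef) (t : ℝ) : mlog (mpow A t) = t • mlog A := by
  have hfin := A.finite_real_spectrum
  simp only [mlog, mpow, matFun_eq_cfc]
  rw [← cfc_comp' Real.log (· ^ t) A ((hfin.image _).continuousOn _) (hfin.continuousOn _)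
      hA.isHermitian.isSelfAdjoint, ← cfc_const_mul t Real.log A (hfin.continuousOn _)]
  exact cfc_congr fun x hx => Real.log_rpow (hA.isStrictlyPositive.spectrum_pos hx) t

lemma msqrt_eq_sqrt (hA : A.PosSemidef) : msqrt A = CFC.sqrt A := by
  rw [msqrt, matFun_eq_cfc, CFC.sqrt_eq_real_sqrt A hA.nonneg, cfcₙ_eq_cfc]

lemma msqrt_mul_msqrt (hA : A.PosSemidef) : msqrt A * msqrt A = A := by
  rw [msqrt_eq_sqrt hA, CFC.sqrt_mul_sqrt_self A hA.nonneg]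

lemma posDef_msqrt (hA : A.PosDef) : (msqrt A).PosDef := by
  rw [msqrt_eq_sqrt hA.posSemidef]
  exact (hA.isStrictlyPositive.sqrt A).posDef

lemma fnorm_smul (r : ℝ) (X : Matrix (Fin m) (Fin m) ℂ) : fnorm (r • X) = |r| * fnorm X := by
  simp only [fnorm, conjTranspose_smul, star_trivial, smul_mul_smul_comm, trace_smul,
    Complex.smul_re, smul_eq_mul]
  rw [Real.sqrt_mul (mul_self_nonneg r), Real.sqrt_mul_self_eq_abs]

lemma conjTranspose_matFun_mul_matFun (f : ℝ → ℝ) (A : Matrix (Fin m) (Fin m) ℂ) :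
    (matFun f A)ᴴ * matFun f A = cfc (fun x => f x * f x) A := by
  have hf := A.finite_real_spectrum.continuousOn f
  rw [matFun_eq_cfc, (cfc_predicate f A).isHermitian.eq, cfc_mul f f A hf hf]

lemma fnorm_matFun_eq_of_charpoly_eq (hA : A.IsHermitian) (hB : B.IsHermitian)
    (h : A.charpoly = B.charpoly) (f : ℝ → ℝ) : fnorm (matFun f A) = fnorm (matFun f B) := by
  rw [fnorm, fnorm, conjTranspose_matFun_mul_matFun, conjTranspose_matFun_mul_matFun,
    trace_cfc_eq_of_charpoly_eq hA hB h]

lemma isHermitian_inv_msqrt_mul_mul_inv_msqrt (hX : X.PosDef) (hY : Y.IsHermitian) :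
    ((msqrt X)⁻¹ * Y * (msqrt X)⁻¹).IsHermitian := by
  have hS := (posDef_msqrt hX).isHermitian.inv
  simpa only [hS.eq] using isHermitian_mul_mul_conjTranspose (msqrt X)⁻¹ hY

lemma charpoly_inv_msqrt_mul_mul_inv_msqrt (hX : X.PosSemidef) :
    ((msqrt X)⁻¹ * Y * (msqrt X)⁻¹).charpoly = (Y * X⁻¹).charpoly := by
  rw [mul_assoc, charpoly_mul_comm, mul_assoc, ← Matrix.mul_inv_rev, msqrt_mul_msqrt hX]

lemma rdist_eq_fnorm_mlog_of_charpoly_eq (hX : X.PosDef) (hY : Y.IsHermitian)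
    (hA : A.IsHermitian) (h : (Y * X⁻¹).charpoly = A.charpoly) :
    rdist X Y = fnorm (mlog A) :=
  fnorm_matFun_eq_of_charpoly_eq (isHermitian_inv_msqrt_mul_mul_inv_msqrt hX hY) hA
    ((charpoly_inv_msqrt_mul_mul_inv_msqrt hX.posSemidef).trans h) Real.log

lemma rdist_congruence (hP : IsUnit P) (hX : X.PosDef) (hY : Y.IsHermitian) :
    rdist (P * X * Pᴴ) (P * Y * Pᴴ) = rdist X Y := by
  refine rdist_eq_fnorm_mlog_of_charpoly_eq (hP.posDef_star_right_conjugate_iff.2 hX)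
    (isHermitian_mul_mul_conjTranspose P hY) (isHermitian_inv_msqrt_mul_mul_inv_msqrt hX hY) ?_
  rw [charpoly_mul_mul_inv hP ((isUnit_conjTranspose P).2 hP),
    charpoly_inv_msqrt_mul_mul_inv_msqrt hX.posSemidef]

lemma rdist_mpow_mpow (hA : A.PosDef) (s t : ℝ) :
    rdist (mpow A s) (mpow A t) = |t - s| * fnorm (mlog A) := by
  have hpow (r : ℝ) := (posDef_mpow hA r).isHermitian
  rw [rdist_eq_fnorm_mlog_of_charpoly_eq (posDef_mpow hA s) (hpow t) (hpow (t - s))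
    (by rw [mpow_mul_inv_mpow hA]), mlog_mpow hA, fnorm_smul]

lemma wgmean_zero (hA : A.PosDef) (hB : B.IsHermitian) : wgmean A B 0 = A := by
  rw [wgmean, mpow_zero (isHermitian_inv_msqrt_mul_mul_inv_msqrt hA hB), mul_one,
    msqrt_mul_msqrt hA.posSemidef]

lemma wgmean_one (hA : A.PosDef) (hB : B.IsHermitian) : wgmean A B 1 = B := by
  have hS := (isUnit_iff_isUnit_det _).1 (posDef_msqrt hA).isUnit
  rw [wgmean, mpow_one (isHermitian_inv_msqrt_mul_mul_inv_msqrt hA hB), mul_assoc,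
    nonsing_inv_mul_cancel_right _ _ hS, mul_nonsing_inv_cancel_left _ _ hS]

lemma rdist_wgmean_wgmean (hA : A.PosDef) (hB : B.PosDef) (s t : ℝ) :
    rdist (wgmean A B s) (wgmean A B t) = |t - s| * rdist A B := by
  have hS := posDef_msqrt hA
  set C := (msqrt A)⁻¹ * B * (msqrt A)⁻¹
  have hC : C.PosDef := by
    have h := hS.inv.isUnit.posDef_star_right_conjugate_iff.2 hB
    rwa [star_eq_conjTranspose, hS.inv.isHermitian.eq] at h
  have hwgmean (r : ℝ) : wgmean A B r = msqrt A * mpow C r * (msqrt A)ᴴ := by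
    rw [hS.isHermitian.eq, wgmean]
  calc rdist (wgmean A B s) (wgmean A B t)
    _ = rdist (mpow C s) (mpow C t) := by
      rw [hwgmean, hwgmean,
        rdist_congruence hS.isUnit (posDef_mpow hC s) (posDef_mpow hC t).isHermitian]
    _ = |t - s| * fnorm (mlog C) := rdist_mpow_mpow hC s t
    _ = |t - s| * rdist A B := rfl

end WeightedGeometricMean

theorem wgmean_geodesic_general {m : ℕ} {A B : Matrix (Fin m) (Fin m) ℂ}
    (hA : A.PosDef) (hB : B.PosDef) :
    (∀ s t : ℝ, rdist (wgmean A B s) (wgmean A B t) = |t - s| * rdist A B) ∧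
    wgmean A B 0 = A ∧ wgmean A B 1 = B :=
  ⟨rdist_wgmean_wgmean hA hB, wgmean_zero hA hB.isHermitian, wgmean_one hA hB.isHermitian⟩

/-- The curve `α(t) = A #_t B` satisfies `δ(α(s), α(t)) = |t - s| ⬝ δ(A,B)`, with
`α(0) = A` and `α(1) = B`; i.e., it is (after reparametrization by arc length) an isometry
onto the geodesic arc from `A` to `B`. -/
theorem wgmean_geodesic {m : ℕ} (A B : Matrix (Fin m) (Fin m) ℂ)
    (hA : A.PosDef) (hB : B.PosDef) :
    (∀ s t : ℝ, s ∈ Set.Icc (0 : ℝ) 1 → t ∈ Set.Icc (0 : ℝ) 1 →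
      rdist (wgmean A B s) (wgmean A B t) = |t - s| * rdist A B) ∧
    wgmean A B 0 = A ∧ wgmean A B 1 = B :=
  (wgmean_geodesic_general hA hB).imp_left fun h s t _ _ => h s t
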